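/- Let 0<γ<1, a≥0 real, T>0, and let k:[0,T]→ℝ be continuously differentiable. For t∈(0,T] define the Riemann–Liouville fractional substantial derivative of order 1−γ by (ˢD_t^{1−γ}k)(t) = (d/dt + a)[ e^{−a t}·(1/Γ(γ)) ∫₀ᵗ (t−s)^{γ−1} e^{a s} k(s) ds ]. Then ∫₀ᵀ (ˢD_t^{1−γ}k)(t)·k(t) dt ≥ 0. -/

import Mathlib

open Real MeasureTheory intervalIntegral

/-- Riemann–Liouville fractional substantial derivative of order `1−γ` with
parameter `a`:
`(ˢD_t^{1−γ}k)(t) = (d/dt + a)[ e^{−a t}·(1/Γ(γ)) ∫₀ᵗ (t−s)^{γ−1} e^{a s} k(s) ds ]`. -/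
noncomputable def rlSubDerivOneSub (γ a : ℝ) (k : ℝ → ℝ) (t : ℝ) : ℝ :=
  deriv (fun u => Real.exp (-(a * u)) *
      ((1 / Real.Gamma γ) * ∫ s in (0:ℝ)..u, (u - s) ^ (γ - 1) * (Real.exp (a * s) * k s))) t
    + a * (Real.exp (-(a * t)) *
      ((1 / Real.Gamma γ) * ∫ s in (0:ℝ)..t, (t - s) ^ (γ - 1) * (Real.exp (a * s) * k s)))

/-! Put `w s = e^{as} k s` and let `I` be the Riemann–Liouville integral of order `γ`. Conjugating
by `e^{at}` turns `d/dt + a` into `d/dt`, so the integrand is `e^{-2at} w (I w)'`. Integrating the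
square `(w t - w s)²` by parts against the kernel, which increases up to its singularity `s = t`,
gives Alikhanov's inequality `(I w²)' ≤ 2 w (I w)'`. As `a ≥ 0`, the integrand then dominates half
the derivative of `e^{-2at} I w²`, a function which vanishes at `0` and is nonnegative at `T`. -/

section SingularKernel

variable {κ : ℝ → ℝ} {f f' : ℝ → ℝ → ℝ} {a b : ℝ}

lemma exists_forall_ball_uIoc_norm_le (hf : Continuous (Function.uncurry f)) (t : ℝ) :
    ∃ C, ∀ u ∈ Metric.ball t 1, ∀ x ∈ Set.uIoc a b, ‖f u x‖ ≤ C := by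
  obtain ⟨C, hC⟩ := ((isCompact_closedBall t 1).prod (isCompact_uIcc (a := a) (b := b)))
    |>.exists_bound_of_continuousOn hf.continuousOn
  exact ⟨C, fun u hu x hx => hC (u, x)
    ⟨Metric.ball_subset_closedBall hu, Set.uIoc_subset_uIcc hx⟩⟩

lemma continuous_intervalIntegral_mul (hκ : IntervalIntegrable κ volume a b)
    (hf : Continuous (Function.uncurry f)) :
    Continuous fun t => ∫ x in a..b, κ x * f t x := by
  refine continuous_iff_continuousAt.2 fun t => ?_
  obtain ⟨C, hC⟩ := exists_forall_ball_uIoc_norm_le (a := a) (b := b) hf t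
  have hint (u : ℝ) : IntervalIntegrable (fun x => κ x * f u x) volume a b :=
    hκ.mul_continuousOn (hf.uncurry_left u).continuousOn
  refine intervalIntegral.continuousAt_of_dominated_interval (bound := fun x => ‖κ x‖ * C)
    (.of_forall fun u => (hint u).def'.aestronglyMeasurable) ?_
    (hκ.norm.mul_const C) (.of_forall fun x _ => ?_)
  · filter_upwards [Metric.ball_mem_nhds t one_pos] with u hu
    refine .of_forall fun x hx => ?_
    rw [norm_mul]
    gcongr
    exact hC u hu x hx
  · exact (continuous_const.mul (hf.uncurry_right x)).continuousAt

lemma hasDerivAt_intervalIntegral_mul (hκ : IntervalIntegrable κ volume a b)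
    (hf : ∀ t x, HasDerivAt (f · x) (f' t x) t) (hfc : ∀ t, Continuous (f t))
    (hf' : Continuous (Function.uncurry f')) (t : ℝ) :
    HasDerivAt (fun t => ∫ x in a..b, κ x * f t x) (∫ x in a..b, κ x * f' t x) t := by
  obtain ⟨C, hC⟩ := exists_forall_ball_uIoc_norm_le (a := a) (b := b) hf' t
  have hint (u : ℝ) : IntervalIntegrable (fun x => κ x * f u x) volume a b :=
    hκ.mul_continuousOn (hfc u).continuousOn
  refine (intervalIntegral.hasDerivAt_integral_of_dominated_loc_of_deriv_le
    (bound := fun x => ‖κ x‖ * C) (Metric.ball_mem_nhds t one_pos)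
    (.of_forall fun u => (hint u).def'.aestronglyMeasurable) (hint t)
    (hκ.mul_continuousOn (hf'.uncurry_left t).continuousOn).def'.aestronglyMeasurable
    (.of_forall fun x hx u hu => ?_) (hκ.norm.mul_const C)
    (.of_forall fun x _ u _ => (hf u x).const_mul (κ x))).2
  rw [norm_mul]
  gcongr
  exact hC u hu x hx

end SingularKernel

lemma rpow_sub_one_mul_self {x γ : ℝ} (hx : 0 ≤ x) (hγ : γ ≠ 0) : x ^ (γ - 1) * x = x ^ γ := by
  rw [← rpow_add_one' hx (by simpa using hγ), sub_add_cancel]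

lemma intervalIntegrable_sub_rpow {r : ℝ} (hr : -1 < r) (a b c : ℝ) :
    IntervalIntegrable (fun s => (c - s) ^ r) volume a b := by
  simpa using (intervalIntegrable_rpow' (a := c - a) (b := c - b) hr).comp_sub_left c

/-- The Riemann–Liouville fractional integral of order `γ` based at `0`, normalised by `1 / Γ(γ)`.
It is meant for `t ≥ 0`: for `t < 0` the kernel is a real power of a negative base. -/
noncomputable def rlIntegral (γ : ℝ) (f : ℝ → ℝ) (t : ℝ) : ℝ :=
  (1 / Gamma γ) * ∫ s in (0:ℝ)..t, (t - s) ^ (γ - 1) * f s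

section rlIntegral

variable {γ t : ℝ} {f g w : ℝ → ℝ}

lemma rlIntegral_zero_right (γ : ℝ) (f : ℝ → ℝ) : rlIntegral γ f 0 = 0 := by
  simp [rlIntegral]

lemma rlIntegral_congr (ht : 0 ≤ t) (h : Set.EqOn f g (Set.Icc 0 t)) :
    rlIntegral γ f t = rlIntegral γ g t := by
  unfold rlIntegral
  congr 1
  refine integral_congr fun s hs => ?_
  rw [Set.uIcc_of_le ht] at hs
  simp only [h hs]

lemma rlIntegral_const_mul (γ c : ℝ) (f : ℝ → ℝ) (t : ℝ) :
    rlIntegral γ (fun s => c * f s) t = c * rlIntegral γ f t := by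
  simp only [rlIntegral, mul_left_comm _ c, intervalIntegral.integral_const_mul]

lemma rlIntegral_nonneg (hγ : 0 < γ) (ht : 0 ≤ t) (hf : ∀ s ∈ Set.Icc 0 t, 0 ≤ f s) :
    0 ≤ rlIntegral γ f t :=
  mul_nonneg (one_div_nonneg.2 (Gamma_pos_of_pos hγ).le) <|
    integral_nonneg ht fun s hs => mul_nonneg (rpow_nonneg (sub_nonneg.2 hs.2) _) (hf s hs)

lemma intervalIntegrable_rlKernel_mul (hγ : 0 < γ) (hf : Continuous f) (t : ℝ) :
    IntervalIntegrable (fun s => (t - s) ^ (γ - 1) * f s) volume 0 t :=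
  (intervalIntegrable_sub_rpow (by linarith) 0 t t).mul_continuousOn hf.continuousOn

lemma rlIntegral_sub (hγ : 0 < γ) (hf : Continuous f) (hg : Continuous g) (t : ℝ) :
    rlIntegral γ (fun s => f s - g s) t = rlIntegral γ f t - rlIntegral γ g t := by
  simp only [rlIntegral, mul_sub]
  rw [integral_sub (intervalIntegrable_rlKernel_mul hγ hf t)
    (intervalIntegrable_rlKernel_mul hγ hg t), mul_sub]

lemma rlIntegral_const_sub_mul (hγ : 0 < γ) (hf : Continuous f) (hg : Continuous g) (c t : ℝ) :
    rlIntegral γ (fun s => (c - f s) * g s) t =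
      c * rlIntegral γ g t - rlIntegral γ (fun s => f s * g s) t := by
  simp only [sub_mul]
  rw [rlIntegral_sub hγ (by fun_prop) (by fun_prop), rlIntegral_const_mul]

/- After this rescaling the singularity of the kernel no longer moves with `t`, so the integral can
be differentiated under the integral sign. -/
lemma rlIntegral_eq_rpow_mul (hγ : γ ≠ 0) (ht : 0 ≤ t) (f : ℝ → ℝ) :
    rlIntegral γ f t = t ^ γ * rlIntegral γ (fun x => f (t * x)) 1 := by
  have hsubst : ∫ s in (0:ℝ)..t, (t - s) ^ (γ - 1) * f s =
      t * ∫ x in (0:ℝ)..1, (t - t * x) ^ (γ - 1) * f (t * x) := by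
    simpa using (mul_integral_comp_mul_left (a := 0) (b := 1)
      (f := fun s => (t - s) ^ (γ - 1) * f s) t).symm
  have hkernel : ∫ x in (0:ℝ)..1, (t - t * x) ^ (γ - 1) * f (t * x) =
      t ^ (γ - 1) * ∫ x in (0:ℝ)..1, (1 - x) ^ (γ - 1) * f (t * x) := by
    rw [← intervalIntegral.integral_const_mul]
    refine integral_congr fun x hx => ?_
    rw [Set.uIcc_of_le zero_le_one] at hx
    simp only [← mul_one_sub t x, mul_rpow ht (sub_nonneg.2 hx.2), mul_assoc]
  rw [rlIntegral, rlIntegral, hsubst, hkernel, ← rpow_sub_one_mul_self ht hγ]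
  ring

lemma continuousOn_rlIntegral (hγ : 0 < γ) (hf : Continuous f) :
    ContinuousOn (rlIntegral γ f) (Set.Ici 0) := by
  have hunit : Continuous fun t => rlIntegral γ (fun x => f (t * x)) 1 :=
    continuous_const.mul <| continuous_intervalIntegral_mul (f := fun t x => f (t * x))
      (intervalIntegrable_sub_rpow (by linarith) 0 1 1) (by fun_prop)
  have hpow : Continuous fun t : ℝ => t ^ γ := continuous_id.rpow_const fun _ => .inr hγ.le
  exact (hpow.mul hunit).continuousOn.congr fun t ht => rlIntegral_eq_rpow_mul hγ.ne' ht f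

lemma mul_rlIntegral_eq_add (hγ : 0 < γ) (ht : 0 ≤ t) (hw : ContDiff ℝ 1 w) :
    γ * rlIntegral γ w t =
      t ^ γ / Gamma γ * w 0 + rlIntegral γ (fun s => (t - s) * deriv w s) t := by
  have hw' := hw.continuous_deriv_one
  have hprim (s : ℝ) (hs : s ∈ Set.Ioo (min 0 t) (max 0 t)) :
      HasDerivAt (fun s => -(t - s) ^ γ) (γ * (t - s) ^ (γ - 1)) s := by
    rw [min_eq_left ht, max_eq_right ht] at hs
    exact (((hasDerivAt_id s).const_sub t).rpow_const
      (.inl (sub_pos.2 hs.2).ne')).neg.congr_deriv (by simp)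
  have hparts := integral_mul_deriv_eq_deriv_mul_of_hasDerivAt (a := 0) (b := t)
    (v := fun s => -(t - s) ^ γ) hw.continuous.continuousOn
    ((continuous_const.sub continuous_id).rpow_const fun _ => .inr hγ.le).neg.continuousOn
    (fun s _ => (hw.differentiable one_ne_zero s).hasDerivAt) hprim
    (hw'.intervalIntegrable _ _)
    ((intervalIntegrable_sub_rpow (by linarith) 0 t t).const_mul γ)
  have hleft : ∫ s in (0:ℝ)..t, w s * (γ * (t - s) ^ (γ - 1)) =
      γ * ∫ s in (0:ℝ)..t, (t - s) ^ (γ - 1) * w s := by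
    rw [← intervalIntegral.integral_const_mul]
    exact integral_congr fun s _ => by ring
  have hright : ∫ s in (0:ℝ)..t, deriv w s * -(t - s) ^ γ =
      -∫ s in (0:ℝ)..t, (t - s) ^ (γ - 1) * ((t - s) * deriv w s) := by
    rw [← intervalIntegral.integral_neg]
    refine integral_congr fun s hs => ?_
    rw [Set.uIcc_of_le ht] at hs
    simp only [← rpow_sub_one_mul_self (sub_nonneg.2 hs.2) hγ.ne']
    ring
  simp only [sub_self, zero_rpow hγ.ne', sub_zero] at hparts
  rw [hleft, hright] at hparts
  unfold rlIntegral
  linear_combination (1 / Gamma γ) * hparts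

theorem hasDerivAt_rlIntegral (hγ : 0 < γ) (ht : 0 < t) (hw : ContDiff ℝ 1 w) :
    HasDerivAt (rlIntegral γ w) (t ^ (γ - 1) / Gamma γ * w 0 + rlIntegral γ (deriv w) t) t := by
  have : Continuous (deriv w) := hw.continuous_deriv_one
  have hunit : HasDerivAt (fun u => rlIntegral γ (fun x => w (u * x)) 1)
      (rlIntegral γ (fun x => x * deriv w (t * x)) 1) t := by
    refine (hasDerivAt_intervalIntegral_mul (f := fun u x => w (u * x))
      (f' := fun u x => x * deriv w (u * x)) (intervalIntegrable_sub_rpow (by linarith) 0 1 1)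
      (fun u x => ?_) (fun u => by fun_prop) (by fun_prop) t).const_mul _
    exact ((hw.differentiable one_ne_zero (u * x)).hasDerivAt.comp u
      (hasDerivAt_mul_const x)).congr_deriv (mul_comm _ _)
  have hscaled : HasDerivAt (rlIntegral γ w) (γ * t ^ (γ - 1) * rlIntegral γ (fun x => w (t * x)) 1
      + t ^ γ * rlIntegral γ (fun x => x * deriv w (t * x)) 1) t := by
    refine ((hasDerivAt_rpow_const (.inl ht.ne')).mul hunit).congr_of_eventuallyEq ?_
    filter_upwards [lt_mem_nhds ht] with u hu
    exact rlIntegral_eq_rpow_mul hγ.ne' hu.le w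
  have hparts := mul_rlIntegral_eq_add hγ ht.le hw
  have hweighted : rlIntegral γ (fun s => s * deriv w s) t =
      t ^ γ * (t * rlIntegral γ (fun x => x * deriv w (t * x)) 1) := by
    simp only [rlIntegral_eq_rpow_mul hγ.ne' ht.le, mul_assoc t, rlIntegral_const_mul]
  rw [rlIntegral_const_sub_mul hγ continuous_id' hw.continuous_deriv_one, hweighted,
    rlIntegral_eq_rpow_mul hγ.ne' ht.le w, ← rpow_sub_one_mul_self ht.le hγ.ne'] at hparts
  refine hscaled.congr_deriv (mul_left_cancel₀ ht.ne' ?_)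
  rw [← rpow_sub_one_mul_self ht.le hγ.ne']
  linear_combination hparts

lemma intervalIntegrable_deriv_rlIntegral (hγ : 0 < γ) (ht : 0 ≤ t) (hw : ContDiff ℝ 1 w) :
    IntervalIntegrable (deriv (rlIntegral γ w)) volume 0 t := by
  have hpow : IntervalIntegrable (fun s : ℝ => s ^ (γ - 1) / Gamma γ * w 0) volume 0 t :=
    ((intervalIntegrable_rpow' (by linarith)).div_const _).mul_const _
  have hcont : ContinuousOn (rlIntegral γ (deriv w)) (Set.uIcc 0 t) :=
    (continuousOn_rlIntegral hγ hw.continuous_deriv_one).mono <| by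
      simpa only [Set.uIcc_of_le ht] using Set.Icc_subset_Ici_self
  refine (hpow.add hcont.intervalIntegrable).congr fun s hs => ?_
  rw [Set.uIoc_of_le ht] at hs
  exact (hasDerivAt_rlIntegral hγ hs.1 hw).deriv.symm

lemma continuous_sub_rpow_mul_sq (hγ : 0 < γ) (hw : ContDiff ℝ 1 w) (t : ℝ) :
    Continuous fun s => (t - s) ^ (γ - 1) * (w t - w s) ^ 2 := by
  have hslope : Continuous (dslope w t) := by
    refine continuous_iff_continuousAt.2 fun s => ?_
    rcases eq_or_ne s t with rfl | hs
    · exact continuousAt_dslope_same.2 (hw.differentiable one_ne_zero s)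
    · exact (continuousAt_dslope_of_ne hs).2 hw.continuous.continuousAt
  have hpow : Continuous fun s => (t - s) ^ γ :=
    (continuous_const.sub continuous_id).rpow_const fun _ => .inr hγ.le
  have hfactor (s : ℝ) :
      (t - s) ^ (γ - 1) * (w t - w s) ^ 2 = (t - s) ^ γ * dslope w t s * (w t - w s) := by
    rcases eq_or_ne s t with rfl | hs
    · simp
    · have hdiff : (s - t) * dslope w t s = w s - w t := sub_smul_dslope w t s
      have hrpow : (t - s) ^ γ = (t - s) ^ (γ - 1) * (t - s) := by
        rw [← rpow_add_one (sub_ne_zero.2 hs.symm), sub_add_cancel]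
      rw [hrpow]
      linear_combination ((t - s) ^ (γ - 1) * (w t - w s)) * hdiff
  simp only [hfactor]
  exact (hpow.mul hslope).mul (continuous_const.sub hw.continuous)

lemma rpow_div_Gamma_mul_sq_le_rlIntegral (hγ : 0 < γ) (hγ1 : γ ≤ 1) (ht : 0 ≤ t)
    (hw : ContDiff ℝ 1 w) :
    t ^ (γ - 1) / Gamma γ * (w t - w 0) ^ 2 ≤
      2 * rlIntegral γ (fun s => (w t - w s) * deriv w s) t := by
  have : Continuous (deriv w) := hw.continuous_deriv_one
  have hderiv (s : ℝ) (hs : s ∈ Set.Ioo 0 t) :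
      HasDerivAt (fun s => -((t - s) ^ (γ - 1) * (w t - w s) ^ 2))
        ((γ - 1) * (t - s) ^ (γ - 2) * (w t - w s) ^ 2
          + (t - s) ^ (γ - 1) * (2 * ((w t - w s) * deriv w s))) s := by
    have hkernel := ((hasDerivAt_id s).const_sub t).rpow_const (p := γ - 1)
      (.inl (sub_pos.2 hs.2).ne')
    have hsq := ((hw.differentiable one_ne_zero s).hasDerivAt.const_sub (w t)).pow 2
    refine (hkernel.mul hsq).neg.congr_deriv ?_
    simp only [id_eq, Nat.cast_ofNat, Pi.pow_apply, show γ - 1 - 1 = γ - 2 by ring]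
    ring
  have hdrop (s : ℝ) (hs : s ∈ Set.Ioo 0 t) :
      (γ - 1) * (t - s) ^ (γ - 2) * (w t - w s) ^ 2
          + (t - s) ^ (γ - 1) * (2 * ((w t - w s) * deriv w s)) ≤
        (t - s) ^ (γ - 1) * (2 * ((w t - w s) * deriv w s)) :=
    add_le_of_nonpos_left <| mul_nonpos_of_nonpos_of_nonneg
      (mul_nonpos_of_nonpos_of_nonneg (by linarith) (rpow_nonneg (sub_nonneg.2 hs.2.le) _))
      (sq_nonneg _)
  have hint := (intervalIntegrable_iff_integrableOn_Icc_of_le ht).1 <|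
    intervalIntegrable_rlKernel_mul hγ
      (f := fun s => 2 * ((w t - w s) * deriv w s)) (by fun_prop) t
  have hftc := sub_le_integral_of_hasDeriv_right_of_le ht
    (g := fun s => -((t - s) ^ (γ - 1) * (w t - w s) ^ 2))
    (continuous_sub_rpow_mul_sq hγ hw t).neg.continuousOn
    (fun s hs => (hderiv s hs).hasDerivWithinAt) hint hdrop
  simp only [sub_self, ne_eq, OfNat.ofNat_ne_zero, not_false_eq_true, zero_pow, mul_zero, neg_zero,
    sub_zero, zero_sub, neg_neg] at hftc
  rw [← rlIntegral_const_mul, rlIntegral, div_mul_eq_mul_div, div_eq_mul_one_div, mul_comm]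
  gcongr

theorem deriv_rlIntegral_sq_le (hγ : 0 < γ) (hγ1 : γ ≤ 1) (ht : 0 < t) (hw : ContDiff ℝ 1 w) :
    deriv (rlIntegral γ fun s => w s ^ 2) t ≤ 2 * (w t * deriv (rlIntegral γ w) t) := by
  have hderiv_sq : deriv (fun s => w s ^ 2) = fun s => 2 * (w s * deriv w s) := by
    funext s
    simp [deriv_fun_pow (hw.differentiable one_ne_zero s), mul_assoc]
  have hincrement := rpow_div_Gamma_mul_sq_le_rlIntegral hγ hγ1 ht.le hw
  have hboundary : 0 ≤ t ^ (γ - 1) / Gamma γ * w t ^ 2 := by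
    have := Gamma_pos_of_pos hγ
    positivity
  rw [(hasDerivAt_rlIntegral hγ ht (hw.pow 2)).deriv, (hasDerivAt_rlIntegral hγ ht hw).deriv,
    hderiv_sq, rlIntegral_const_mul]
  rw [rlIntegral_const_sub_mul hγ hw.continuous hw.continuous_deriv_one] at hincrement
  linear_combination hincrement + hboundary

end rlIntegral

section SubstantialDerivative

variable {γ a T : ℝ} {k K : ℝ → ℝ}

lemma rlSubDerivOneSub_eq_deriv_add (γ a : ℝ) (k : ℝ → ℝ) (t : ℝ) :
    rlSubDerivOneSub γ a k t =
      deriv (fun u => exp (-(a * u)) * rlIntegral γ (fun s => exp (a * s) * k s) u) t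
        + a * (exp (-(a * t)) * rlIntegral γ (fun s => exp (a * s) * k s) t) :=
  rfl

lemma rlSubDerivOneSub_eqOn (h : Set.EqOn k K (Set.Icc 0 T)) :
    Set.EqOn (rlSubDerivOneSub γ a k) (rlSubDerivOneSub γ a K) (Set.Ioo 0 T) := by
  have hI (u : ℝ) (hu : u ∈ Set.Ioo 0 T) :
      rlIntegral γ (fun s => exp (a * s) * k s) u = rlIntegral γ (fun s => exp (a * s) * K s) u :=
    rlIntegral_congr hu.1.le fun s hs => by simp only [h ⟨hs.1, hs.2.trans hu.2.le⟩]
  intro t ht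
  rw [rlSubDerivOneSub_eq_deriv_add, rlSubDerivOneSub_eq_deriv_add, hI t ht]
  congr 1
  refine Filter.EventuallyEq.deriv_eq ?_
  filter_upwards [isOpen_Ioo.mem_nhds ht] with u hu
  rw [hI u hu]

lemma rlSubDerivOneSub_eq_exp_mul_deriv (hγ : 0 < γ) (hk : ContDiff ℝ 1 k) {t : ℝ} (ht : 0 < t) :
    rlSubDerivOneSub γ a k t =
      exp (-(a * t)) * deriv (rlIntegral γ fun s => exp (a * s) * k s) t := by
  have hI := (hasDerivAt_rlIntegral (w := fun s => exp (a * s) * k s) hγ ht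
    (by fun_prop)).differentiableAt.hasDerivAt
  have hexp : HasDerivAt (fun u => exp (-(a * u))) (-a * exp (-(a * t))) t :=
    ((hasDerivAt_id t).const_mul a).neg.exp.congr_deriv (by simp; ring)
  rw [rlSubDerivOneSub_eq_deriv_add, (hexp.fun_mul hI).deriv]
  ring

lemma intervalIntegrable_rlSubDerivOneSub_mul (hγ : 0 < γ) (hT : 0 ≤ T) (hk : ContDiff ℝ 1 k) :
    IntervalIntegrable (fun t => rlSubDerivOneSub γ a k t * k t) volume 0 T := by
  have hexp : Continuous fun t => exp (-(a * t)) := by fun_prop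
  refine ((intervalIntegrable_deriv_rlIntegral (w := fun s => exp (a * s) * k s) hγ hT
    (by fun_prop)).continuousOn_mul hexp.continuousOn |>.mul_continuousOn
    hk.continuous.continuousOn).congr fun t ht => ?_
  rw [Set.uIoc_of_le hT] at ht
  simp only [rlSubDerivOneSub_eq_exp_mul_deriv hγ hk ht.1]

lemma exp_mul_deriv_rlIntegral_sq_le (hγ : 0 < γ) (hγ1 : γ ≤ 1) (hk : ContDiff ℝ 1 k) {t : ℝ}
    (ht : 0 < t) :
    exp (-(2 * a * t)) / 2 * deriv (rlIntegral γ fun s => (exp (a * s) * k s) ^ 2) t ≤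
      rlSubDerivOneSub γ a k t * k t := by
  have hexp_sq : exp (-(2 * a * t)) = exp (-(a * t)) * exp (-(a * t)) := by
    rw [← exp_add]
    ring_nf
  have hexp_mul : exp (-(a * t)) * exp (a * t) = 1 := by
    rw [← exp_add, neg_add_cancel, exp_zero]
  have halikhanov := deriv_rlIntegral_sq_le (w := fun s => exp (a * s) * k s) hγ hγ1 ht
    (by fun_prop)
  rw [rlSubDerivOneSub_eq_exp_mul_deriv hγ hk ht]
  set D := deriv (rlIntegral γ fun s => exp (a * s) * k s) t
  calc exp (-(2 * a * t)) / 2 * deriv (rlIntegral γ fun s => (exp (a * s) * k s) ^ 2) t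
      ≤ exp (-(2 * a * t)) / 2 * (2 * (exp (a * t) * k t * D)) := by gcongr
    _ = exp (-(a * t)) * D * k t := by
        rw [hexp_sq]
        linear_combination exp (-(a * t)) * D * k t * hexp_mul

theorem exp_mul_rlIntegral_sq_le_integral_rlSubDerivOneSub_mul (hγ : 0 < γ) (hγ1 : γ ≤ 1)
    (ha : 0 ≤ a) (hT : 0 ≤ T) (hk : ContDiff ℝ 1 k) :
    exp (-(2 * a * T)) / 2 * rlIntegral γ (fun s => (exp (a * s) * k s) ^ 2) T ≤
      ∫ t in (0:ℝ)..T, rlSubDerivOneSub γ a k t * k t := by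
  set w : ℝ → ℝ := fun s => exp (a * s) * k s
  have hw : ContDiff ℝ 1 w := by fun_prop
  have hexp (t : ℝ) : HasDerivAt (fun t => exp (-(2 * a * t)) / 2)
      (-a * exp (-(2 * a * t))) t :=
    (((hasDerivAt_id t).const_mul (2 * a)).neg.exp.div_const 2).congr_deriv (by simp; ring)
  have hcont : ContinuousOn (fun t => exp (-(2 * a * t)) / 2 * rlIntegral γ (fun s => w s ^ 2) t)
      (Set.Icc 0 T) :=
    (Continuous.continuousOn (by fun_prop)).mul <|
      (continuousOn_rlIntegral hγ (hw.continuous.pow 2)).mono Set.Icc_subset_Ici_self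
  have hderiv (t : ℝ) (ht : t ∈ Set.Ioo 0 T) :=
    (hexp t).mul (hasDerivAt_rlIntegral hγ ht.1 (hw.pow 2)).differentiableAt.hasDerivAt
  have hle (t : ℝ) (ht : t ∈ Set.Ioo 0 T) :
      -a * exp (-(2 * a * t)) * rlIntegral γ (fun s => w s ^ 2) t
          + exp (-(2 * a * t)) / 2 * deriv (rlIntegral γ fun s => w s ^ 2) t ≤
        rlSubDerivOneSub γ a k t * k t := by
    have hI : 0 ≤ rlIntegral γ (fun s => w s ^ 2) t :=
      rlIntegral_nonneg hγ ht.1.le fun s _ => sq_nonneg _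
    have hdecay : -a * exp (-(2 * a * t)) * rlIntegral γ (fun s => w s ^ 2) t ≤ 0 :=
      mul_nonpos_of_nonpos_of_nonneg
        (mul_nonpos_of_nonpos_of_nonneg (neg_nonpos.2 ha) (exp_nonneg _)) hI
    exact (add_le_of_nonpos_left hdecay).trans (exp_mul_deriv_rlIntegral_sq_le hγ hγ1 hk ht.1)
  have hint := (intervalIntegrable_iff_integrableOn_Icc_of_le hT).1
    (intervalIntegrable_rlSubDerivOneSub_mul (a := a) hγ hT hk)
  simpa only [rlIntegral_zero_right, mul_zero, sub_zero] using
    sub_le_integral_of_hasDeriv_right_of_le hT hcont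
      (fun t ht => (hderiv t ht).hasDerivWithinAt) hint hle

end SubstantialDerivative

lemma exists_contDiff_eqOn_Icc {E : Type*} [NormedAddCommGroup E] [NormedSpace ℝ E]
    [CompleteSpace E] {f : ℝ → E} {a b : ℝ} (hab : a < b) (hf : ContDiffOn ℝ 1 f (Set.Icc a b)) :
    ∃ g : ℝ → E, ContDiff ℝ 1 g ∧ Set.EqOn f g (Set.Icc a b) := by
  set p : ℝ → E :=
    Set.IccExtend hab.le ((Set.Icc a b).domRestrict (derivWithin f (Set.Icc a b))) with hp
  have hpc : Continuous p := (continuousOn_iff_continuous_domRestrict.1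
    (hf.continuousOn_derivWithin (uniqueDiffOn_Icc hab) le_rfl)).Icc_extend'
  have hderiv (x : ℝ) : HasDerivAt (fun t => f a + ∫ s in a..t, p s) (p x) x :=
    (hpc.integral_hasStrictDerivAt a x).hasDerivAt.const_add _
  refine ⟨fun t => f a + ∫ s in a..t, p s, contDiff_one_iff_deriv.2
    ⟨fun x => (hderiv x).differentiableAt, by simpa only [funext fun x => (hderiv x).deriv]⟩,
    fun t ht => ?_⟩
  have hf' (x : ℝ) (hx : x ∈ Set.Ioo a t) : HasDerivAt f (p x) x := by
    have hx' : x ∈ Set.Icc a b := ⟨hx.1.le, hx.2.le.trans ht.2⟩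
    rw [hp, Set.IccExtend_of_mem _ _ hx']
    exact (hf.differentiableOn one_ne_zero x hx').hasDerivWithinAt.hasDerivAt
      (Icc_mem_nhds hx.1 (hx.2.trans_le ht.2))
  change f t = f a + ∫ s in a..t, p s
  rw [integral_eq_sub_of_hasDerivAt_of_le ht.1
    (hf.continuousOn.mono (Set.Icc_subset_Icc_right ht.2)) hf' (hpc.intervalIntegrable _ _),
    add_sub_cancel]

/-- positivity of the Riemann–Liouville fractional substantial derivative:
for `0 < γ < 1`, `a ≥ 0`, `T > 0` and `k` continuously differentiable on `[0,T]`,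
`∫₀ᵀ (ˢD_t^{1−γ}k)(t)·k(t) dt ≥ 0`. -/
theorem rl_substantial_derivative_positivity
    (γ a T : ℝ) (hγ0 : 0 < γ) (hγ1 : γ < 1) (ha : 0 ≤ a) (hT : 0 < T)
    (k : ℝ → ℝ) (hk : ContDiffOn ℝ 1 k (Set.Icc 0 T)) :
    0 ≤ ∫ t in (0:ℝ)..T, rlSubDerivOneSub γ a k t * k t := by
  obtain ⟨K, hK, hkK⟩ := exists_contDiff_eqOn_Icc hT hk
  have hcongr : ∫ t in (0:ℝ)..T, rlSubDerivOneSub γ a k t * k t =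
      ∫ t in (0:ℝ)..T, rlSubDerivOneSub γ a K t * K t :=
    integral_congr_Ioo_of_le hT.le fun t ht => by
      simp only [rlSubDerivOneSub_eqOn hkK ht, hkK (Set.Ioo_subset_Icc_self ht)]
  have hI : 0 ≤ rlIntegral γ (fun s => (exp (a * s) * K s) ^ 2) T :=
    rlIntegral_nonneg hγ0 hT.le fun s _ => sq_nonneg _
  calc 0 ≤ exp (-(2 * a * T)) / 2 * rlIntegral γ (fun s => (exp (a * s) * K s) ^ 2) T := by
        positivity
    _ ≤ ∫ t in (0:ℝ)..T, rlSubDerivOneSub γ a K t * K t :=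
        exp_mul_rlIntegral_sq_le_integral_rlSubDerivOneSub_mul hγ0 hγ1.le ha hT.le hK
    _ = ∫ t in (0:ℝ)..T, rlSubDerivOneSub γ a k t * k t := hcongr.symm
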